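/- Let p < c₂ < p_s^*, Λ ∈ [1,(c₂/p)^{1/4}), λ > 0 and C ≥ 0, M ∈ ℝ. Let (u_n) be a sequence of measurable functions ℝ^N → ℝ with [u_n]_{s,p} < ∞ and with ∫_Ω |u_n|^{p_s^*} dx, ∫_Ω f(x,u_n)u_n dx, ∫_Ω F(x,u_n) dx finite for every n, satisfying 0 ≤ c₂ ∫_Ω F(x,u_n) dx ≤ ∫_Ω f(x,u_n)u_n dx, I(u_n) ≤ M, and |⟨I′(u_n),u_n⟩| ≤ C(1 + [u_n]_{s,p}) for all n. Then sup_n [u_n]_{s,p} < ∞. -/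

import Mathlib

/-!
The linear combination `I(u) - ⟨I′(u),u⟩ / c₂` controls the Gagliardo energy `G = [u]_{s,p}^p`.
The structure conditions on `Φ` and `K` give, by pointwise comparison of the integrands
(`PPhi_bounds`, `mul_kernel_bounds`, `lintegral_le_const_mul`),
`∬ PΦ(u(x)-u(y)) K ≥ G / (Λ² p)` and `∬ Φ(u(x)-u(y)) (u(x)-u(y)) K ≤ Λ² G`.
The critical term enters the combination with the coefficient `1/c₂ - 1/p_s^* > 0`, and the
`λ`-term has the good sign by the Ambrosetti–Rabinowitz type inequality `c₂ ∫ F ≤ ∫ f u`. Hence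
`(1/(Λ² p) - Λ²/c₂) G ≤ M + (C/c₂) (1 + G^{1/p})`, where the coefficient on the left is positive
exactly because `Λ⁴ < c₂/p`. As `p > 1`, such an inequality bounds `G^{1/p}` (`bound_of_rpow_le`).
-/

open MeasureTheory ENNReal

/-- The primitive `PΦ(t) = ∫_0^{|t|} Φ(τ) dτ` of `Φ`. -/
noncomputable def PPhi (Φ : ℝ → ℝ) (t : ℝ) : ℝ := ∫ τ in (0:ℝ)..|t|, Φ τ

/-- The primitive `F(x,t) = ∫_0^t f(x,τ) dτ` of the nonlinearity `f`. -/
noncomputable def Fprim (f : α → ℝ → ℝ) (x : α) (t : ℝ) : ℝ := ∫ τ in (0:ℝ)..t, f x τ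

/-- Integrating `Λ⁻¹ τ^(p-1) ≤ Φ τ ≤ Λ τ^(p-1)` over `[0, |t|]`. -/
lemma PPhi_bounds {p Λ : ℝ} (hp : 1 < p) {Φ : ℝ → ℝ} (hΦc : Continuous Φ) (hΦ0 : Φ 0 = 0)
    (hΦ : ∀ t : ℝ, Λ⁻¹ * |t| ^ p ≤ Φ t * t ∧ Φ t * t ≤ Λ * |t| ^ p) (t : ℝ) :
    Λ⁻¹ / p * |t| ^ p ≤ PPhi Φ t ∧ PPhi Φ t ≤ Λ / p * |t| ^ p := by
  have hint : ∀ c : ℝ, ∫ τ in (0:ℝ)..|t|, c * τ ^ (p - 1) = c / p * |t| ^ p := by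
    intro c
    rw [intervalIntegral.integral_const_mul, integral_rpow (Or.inl (by linarith)), sub_add_cancel,
      Real.zero_rpow (by linarith)]
    ring
  have hii : ∀ c : ℝ, IntervalIntegrable (fun τ : ℝ => c * τ ^ (p - 1)) volume 0 |t| := fun c =>
    (intervalIntegral.intervalIntegrable_rpow' (by linarith)).const_mul c
  have hΦi : IntervalIntegrable Φ volume 0 |t| := hΦc.intervalIntegrable _ _
  have hpt : ∀ τ ∈ Set.Icc 0 |t|, Λ⁻¹ * τ ^ (p - 1) ≤ Φ τ ∧ Φ τ ≤ Λ * τ ^ (p - 1) := by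
    intro τ hτ
    rcases hτ.1.eq_or_lt with h | h
    · rw [← h, hΦ0, Real.zero_rpow (by linarith)]
      simp
    · have hs : |τ| ^ p = τ ^ (p - 1) * τ := by
        rw [abs_of_pos h, Real.rpow_sub_one h.ne', div_mul_cancel₀ _ h.ne']
      obtain ⟨h1, h2⟩ := hΦ τ
      rw [hs, ← mul_assoc] at h1 h2
      exact ⟨le_of_mul_le_mul_right h1 h, le_of_mul_le_mul_right h2 h⟩
  rw [← hint, ← hint]
  exact ⟨intervalIntegral.integral_mono_on (abs_nonneg t) (hii _) hΦi fun τ hτ => (hpt τ hτ).1,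
    intervalIntegral.integral_mono_on (abs_nonneg t) hΦi (hii _) fun τ hτ => (hpt τ hτ).2⟩

/-- A pointwise domination of integrands by a constant multiple passes to iterated lower integrals;
no measurability is needed because the constant is finite. -/
lemma lintegral_le_const_mul {α : Type*} [MeasurableSpace α] {μ : Measure α} {a b : α → α → ℝ}
    {c : ℝ} (hc : 0 ≤ c) (h : ∀ x y, a x y ≤ c * b x y) :
    (∫⁻ x, ∫⁻ y, ENNReal.ofReal (a x y) ∂μ ∂μ)
      ≤ ENNReal.ofReal c * ∫⁻ x, ∫⁻ y, ENNReal.ofReal (b x y) ∂μ ∂μ := by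
  rw [← lintegral_const_mul' _ _ ENNReal.ofReal_ne_top]
  refine lintegral_mono fun x => ?_
  dsimp only
  rw [← lintegral_const_mul' _ _ ENNReal.ofReal_ne_top]
  refine lintegral_mono fun y => ?_
  dsimp only
  rw [← ENNReal.ofReal_mul hc]
  exact ENNReal.ofReal_le_ofReal (h x y)

/-- If `0 ≤ c' |t|^p ≤ v ≤ c |t|^p`, then multiplying `v` by the kernel costs one more factor `Λ`
on each side. The kernel is unconstrained on the diagonal, where `t = 0` (so `v = 0`). -/
lemma mul_kernel_bounds {Λ p q c c' r k t v : ℝ} (hp : 1 < p) (hΛ : 1 ≤ Λ)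
    (hr : 0 ≤ r) (hr0 : r = 0 → t = 0)
    (hc' : 0 ≤ c') (hv1 : c' * |t| ^ p ≤ v) (hv2 : v ≤ c * |t| ^ p)
    (hk : r ≠ 0 → 1 / (Λ * r ^ q) ≤ k ∧ k ≤ Λ / r ^ q) :
    c' / Λ * (|t| ^ p / r ^ q) ≤ v * k ∧ v * k ≤ c * Λ * (|t| ^ p / r ^ q) := by
  have hΛ0 : 0 < Λ := by linarith
  rcases hr.eq_or_lt with h | h
  · have hz : |t| ^ p = 0 := by rw [hr0 h.symm, abs_zero, Real.zero_rpow (by linarith)]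
    rw [hz] at hv1 hv2 ⊢
    have : v = 0 := by linarith
    simp [this]
  · obtain ⟨k1, k2⟩ := hk h.ne'
    have hrq : 0 < r ^ q := Real.rpow_pos_of_pos h q
    have ht : 0 ≤ |t| ^ p := by positivity
    have hv : 0 ≤ v := le_trans (by positivity) hv1
    constructor
    · calc c' / Λ * (|t| ^ p / r ^ q) = c' * |t| ^ p * (1 / (Λ * r ^ q)) := by
            field_simp
        _ ≤ v * k := by gcongr
    · calc v * k ≤ c * |t| ^ p * (Λ / r ^ q) :=
            mul_le_mul hv2 k2 (le_trans (by positivity) k1) (hv.trans hv2)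
        _ = _ := by ring

lemma toReal_le_of_le_const_mul {a b : ℝ≥0∞} {c : ℝ} (hc : 0 ≤ c) (hb : b ≠ ∞)
    (h : a ≤ ENNReal.ofReal c * b) : a.toReal ≤ c * b.toReal := by
  have := ENNReal.toReal_mono (ENNReal.mul_ne_top ENNReal.ofReal_ne_top hb) h
  rwa [ENNReal.toReal_mul, ENNReal.toReal_ofReal hc] at this

/-- Coercivity: superlinear growth on the left absorbs the linear term on the right. -/
lemma bound_of_rpow_le {p κ D E g : ℝ} (hp : 1 < p) (hκ : 0 < κ) (hD : 0 ≤ D)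
    (hg : 0 ≤ g) (h : κ * g ^ p ≤ D + E * g) :
    g ≤ max 1 (((D + E) / κ) ^ (1 / (p - 1))) := by
  rcases le_total g 1 with h1 | h1
  · exact le_max_of_le_left h1
  · refine le_max_of_le_right ?_
    have hg0 : 0 < g := by linarith
    have hs : g ^ p = g ^ (p - 1) * g := by
      rw [Real.rpow_sub_one hg0.ne', div_mul_cancel₀ _ hg0.ne']
    have h2 : κ * g ^ (p - 1) * g ≤ (D + E) * g := by
      rw [mul_assoc, ← hs]
      nlinarith
    have h3 : g ^ (p - 1) ≤ (D + E) / κ := by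
      rw [le_div_iff₀ hκ, mul_comm]
      exact le_of_mul_le_mul_right h2 hg0
    calc g = (g ^ (p - 1)) ^ (1 / (p - 1)) := by
          rw [← Real.rpow_mul hg, mul_one_div_cancel (by linarith), Real.rpow_one]
      _ ≤ _ := Real.rpow_le_rpow (by positivity) h3 (by
          have : 0 < p - 1 := by linarith
          positivity)

/-- boundedness of Palais–Smale-type sequences: if `Λ ∈ [1,(c₂/p)^{1/4})`,
`I(u_n) ≤ M` and `|⟨I′(u_n),u_n⟩| ≤ C(1 + [u_n]_{s,p})`, together with
`0 ≤ c₂∫_Ω F(x,u_n) ≤ ∫_Ω f(x,u_n)u_n`, then `sup_n [u_n]_{s,p} < ∞`. -/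
theorem stmt14 (N : ℕ) (hN : 0 < N) (s p Λ pstar c₂ : ℝ)
    (hs : 0 < s) (hs1 : s < 1) (hp : 1 < p) (hsp : s * p < N) (hΛ : 1 ≤ Λ)
    (hpstar : pstar = N * p / (N - s * p)) (hpc₂ : p < c₂) (hc₂p : c₂ < pstar)
    (hΛc₂ : Λ < (c₂ / p) ^ ((1:ℝ) / 4))
    (Φ : ℝ → ℝ) (hΦc : Continuous Φ) (hΦ0 : Φ 0 = 0)
    (hΦ : ∀ t : ℝ, Λ⁻¹ * |t| ^ p ≤ Φ t * t ∧ Φ t * t ≤ Λ * |t| ^ p)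
    (K : EuclideanSpace ℝ (Fin N) → EuclideanSpace ℝ (Fin N) → ℝ)
    (hKm : Measurable (fun z : EuclideanSpace ℝ (Fin N) × EuclideanSpace ℝ (Fin N) => K z.1 z.2))
    (hK : ∀ x y, x ≠ y →
      1 / (Λ * ‖x - y‖ ^ ((N : ℝ) + s * p)) ≤ K x y ∧ K x y ≤ Λ / ‖x - y‖ ^ ((N : ℝ) + s * p))
    (Ω : Set (EuclideanSpace ℝ (Fin N))) (hΩo : IsOpen Ω) (hΩb : Bornology.IsBounded Ω)
    (lam : ℝ) (hlam : 0 < lam) (C M : ℝ) (hC : 0 ≤ C)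
    (f : EuclideanSpace ℝ (Fin N) → ℝ → ℝ)
    (hf : Measurable (fun z : EuclideanSpace ℝ (Fin N) × ℝ => f z.1 z.2))
    (u : ℕ → EuclideanSpace ℝ (Fin N) → ℝ) (hu : ∀ n, Measurable (u n))
    (hgag : ∀ n, (∫⁻ x, ∫⁻ y,
      ENNReal.ofReal (|u n x - u n y| ^ p / ‖x - y‖ ^ ((N : ℝ) + s * p))) ≠ ∞)
    (hint1 : ∀ n, IntegrableOn (fun x => |u n x| ^ pstar) Ω)
    (hint2 : ∀ n, IntegrableOn (fun x => f x (u n x) * u n x) Ω)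
    (hint3 : ∀ n, IntegrableOn (fun x => Fprim f x (u n x)) Ω)
    (hF : ∀ n, 0 ≤ c₂ * ∫ x in Ω, Fprim f x (u n x))
    (hFf : ∀ n, c₂ * (∫ x in Ω, Fprim f x (u n x)) ≤ ∫ x in Ω, f x (u n x) * u n x)
    (hIbound : ∀ n,
      (∫⁻ x, ∫⁻ y, ENNReal.ofReal (PPhi Φ (u n x - u n y) * K x y)).toReal
          - (1 / pstar) * (∫ x in Ω, |u n x| ^ pstar)
          - lam * (∫ x in Ω, Fprim f x (u n x)) ≤ M)
    (hI'bound : ∀ n,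
      |(∫⁻ x, ∫⁻ y, ENNReal.ofReal (Φ (u n x - u n y) * (u n x - u n y) * K x y)).toReal
          - (∫ x in Ω, |u n x| ^ pstar)
          - lam * (∫ x in Ω, f x (u n x) * u n x)|
        ≤ C * (1 + ((∫⁻ x, ∫⁻ y,
            ENNReal.ofReal (|u n x - u n y| ^ p / ‖x - y‖ ^ ((N : ℝ) + s * p))).toReal) ^ (1 / p))) :
    ∃ R : ℝ, ∀ n, ((∫⁻ x, ∫⁻ y,
        ENNReal.ofReal (|u n x - u n y| ^ p / ‖x - y‖ ^ ((N : ℝ) + s * p))).toReal) ^ (1 / p) ≤ R := by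
  have hp0 : 0 < p := by linarith
  have hΛ0 : 0 < Λ := by linarith
  have hc0 : 0 < c₂ := by linarith
  have hκ : 0 < Λ⁻¹ / p / Λ - Λ * Λ / c₂ := by
    have h4 : Λ ^ 4 < c₂ / p := by
      calc Λ ^ 4 < ((c₂ / p) ^ ((1:ℝ) / 4)) ^ 4 := by gcongr
        _ = c₂ / p := by
          rw [← Real.rpow_natCast, ← Real.rpow_mul (by positivity)]
          norm_num
    rw [sub_pos, div_lt_iff₀ hc0]
    rw [lt_div_iff₀ hp0] at h4
    calc Λ * Λ = Λ ^ 4 * p * (Λ⁻¹ / p / Λ) := by field_simp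
      _ < c₂ * (Λ⁻¹ / p / Λ) := by gcongr
      _ = _ := mul_comm _ _
  refine ⟨max 1 (((|M| + C / c₂ + C / c₂) / (Λ⁻¹ / p / Λ - Λ * Λ / c₂)) ^ (1 / (p - 1))),
    fun n => ?_⟩
  set G : ℝ≥0∞ := ∫⁻ x, ∫⁻ y,
    ENNReal.ofReal (|u n x - u n y| ^ p / ‖x - y‖ ^ ((N : ℝ) + s * p)) with hG
  have hGtop : G ≠ ∞ := hgag n
  have hdiag : ∀ x y : EuclideanSpace ℝ (Fin N), ‖x - y‖ = 0 → u n x - u n y = 0 := by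
    intro x y h
    rw [norm_sub_eq_zero_iff.mp h, sub_self]
  have hKr : ∀ x y : EuclideanSpace ℝ (Fin N), ‖x - y‖ ≠ 0 →
      1 / (Λ * ‖x - y‖ ^ ((N : ℝ) + s * p)) ≤ K x y ∧
        K x y ≤ Λ / ‖x - y‖ ^ ((N : ℝ) + s * p) := fun x y h =>
    hK x y fun hxy => h (norm_sub_eq_zero_iff.mpr hxy)
  have hA := fun x y => mul_kernel_bounds hp hΛ (norm_nonneg (x - y)) (hdiag x y)
    (by positivity) (PPhi_bounds hp hΦc hΦ0 hΦ (u n x - u n y)).1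
    (PPhi_bounds hp hΦc hΦ0 hΦ (u n x - u n y)).2 (hKr x y)
  have hB := fun x y => mul_kernel_bounds hp hΛ (norm_nonneg (x - y)) (hdiag x y)
    (by positivity) (hΦ (u n x - u n y)).1 (hΦ (u n x - u n y)).2 (hKr x y)
  have hI := hIbound n
  have hI' := (abs_le.mp (hI'bound n)).1
  rw [← hG] at hI'
  set A : ℝ≥0∞ := ∫⁻ x, ∫⁻ y, ENNReal.ofReal (PPhi Φ (u n x - u n y) * K x y) with hAdef
  set B : ℝ≥0∞ := ∫⁻ x, ∫⁻ y,
    ENNReal.ofReal (Φ (u n x - u n y) * (u n x - u n y) * K x y) with hBdef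
  -- Finiteness of the energy: otherwise its `toReal` would be the junk value `0`.
  have hAtop : A ≠ ∞ :=
    ne_top_of_le_ne_top (ENNReal.mul_ne_top ENNReal.ofReal_ne_top hGtop)
      (lintegral_le_const_mul (c := Λ / p * Λ) (by positivity) fun x y => (hA x y).2)
  have hAG : Λ⁻¹ / p / Λ * G.toReal ≤ A.toReal := by
    have hc : 0 < Λ⁻¹ / p / Λ := by positivity
    have := toReal_le_of_le_const_mul (inv_nonneg.mpr hc.le) hAtop
      (lintegral_le_const_mul (inv_nonneg.mpr hc.le) fun x y =>
        (le_inv_mul_iff₀ hc).mpr (hA x y).1)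
    exact (le_inv_mul_iff₀ hc).mp this
  have hBG : B.toReal ≤ Λ * Λ * G.toReal :=
    toReal_le_of_le_const_mul (by positivity) hGtop
      (lintegral_le_const_mul (by positivity) fun x y => (hB x y).2)
  have hS : 0 ≤ ∫ x in Ω, |u n x| ^ pstar := integral_nonneg fun x => by positivity
  have hFn := hFf n
  set S := ∫ x in Ω, |u n x| ^ pstar
  set P := ∫ x in Ω, Fprim f x (u n x)
  set Q := ∫ x in Ω, f x (u n x) * u n x
  set g := G.toReal ^ (1 / p) with hg
  have hgp : g ^ p = G.toReal := by
    rw [hg, ← Real.rpow_mul ENNReal.toReal_nonneg, one_div_mul_cancel hp0.ne', Real.rpow_one]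
  refine bound_of_rpow_le hp hκ (by positivity) (by positivity) ?_
  rw [hgp]
  have e1 : 1 / pstar * S ≤ S / c₂ := by
    rw [div_eq_mul_one_div S, mul_comm S]
    gcongr
  have e2 : lam * P ≤ lam * Q / c₂ := by
    rw [le_div_iff₀ hc0]
    calc lam * P * c₂ = lam * (c₂ * P) := by ring
      _ ≤ lam * Q := by gcongr
  have e3 : B.toReal / c₂ ≤ Λ * Λ / c₂ * G.toReal := by
    rw [div_mul_eq_mul_div]
    gcongr
  have e4 : -(C * (1 + g)) / c₂ ≤ (B.toReal - S - lam * Q) / c₂ := by gcongr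
  have e5 : (B.toReal - S - lam * Q) / c₂ = B.toReal / c₂ - S / c₂ - lam * Q / c₂ := by ring
  have e6 : -(C * (1 + g)) / c₂ = -(C / c₂ + C / c₂ * g) := by ring
  have e7 := le_abs_self M
  -- `I(u) - ⟨I′(u),u⟩ / c₂`, with the critical and `λ`-terms discarded by their signs.
  rw [sub_mul]
  linarith
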